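/- Let f : (0,1) → ℝ be a bounded convex function. Then the one-sided limit lim_{t→0⁺} f(t) (which exists and is finite since f is bounded and convex) equals the limit, as τ → −∞, of the quantity inf_{t∈(0,1)} (f(t) − τ·t); i.e. lim_{t→0⁺} f(t) = lim_{τ→−∞} inf_{t∈(0,1)} (f(t) − τ·t). (The second limit exists because the map τ ↦ inf_{t∈(0,1)}(f(t) − τ·t) is nonincreasing in τ and bounded above by lim_{t→0⁺} f(t).) -/

import Mathlib

/-- **Lemma 5.1.** If `f : (0,1) → ℝ` is a bounded convex function, then the one-sided
limit `lim_{t→0⁺} f(t)` exists and equals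
`lim_{τ→−∞} inf_{t∈(0,1)} (f(t) − τ·t)`. -/
theorem convex_bounded_right_limit_eq_limit_of_inf
    (f : ℝ → ℝ)
    (hconv : ConvexOn ℝ (Set.Ioo (0:ℝ) 1) f)
    (hbdd : ∃ M : ℝ, ∀ t ∈ Set.Ioo (0:ℝ) 1, |f t| ≤ M) :
    ∃ L : ℝ,
      Filter.Tendsto f (nhdsWithin 0 (Set.Ioo (0:ℝ) 1)) (nhds L) ∧
      Filter.Tendsto (fun τ : ℝ => ⨅ t : Set.Ioo (0:ℝ) 1, (f t - τ * t))
        Filter.atBot (nhds L) := by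
  obtain ⟨M, hM⟩ := hbdd
  have hM0 : 0 ≤ M := (abs_nonneg _).trans (hM (1/2) (by constructor <;> norm_num))
  have hslope : ∀ s t : ℝ, 0 < s → s < t → t < 1/2 → f t - f s ≤ 8 * M * (t - s) := by
    intro s t hs hst ht
    have h := hconv.slope_mono_adjacent (x := s) (y := t) (z := 3/4)
      ⟨hs, by linarith⟩ ⟨by norm_num, by norm_num⟩ hst (by linarith)
    have h1 := abs_le.1 (hM t ⟨by linarith, by linarith⟩)
    have h2 := abs_le.1 (hM (3/4) ⟨by norm_num, by norm_num⟩)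
    have h3 : (f (3/4) - f t) / (3/4 - t) ≤ 8 * M := by
      rw [div_le_iff₀ (by linarith)]
      nlinarith
    exact (div_le_iff₀ (by linarith)).1 (h.trans h3)
  have hmono : MonotoneOn (fun t => 8 * M * t - f t) (Set.Ioo 0 (1/2)) := by
    intro s hs t ht hst
    rcases hst.eq_or_lt with rfl | h
    · exact le_rfl
    · have := hslope s t hs.1 h ht.2
      simp only
      linarith
  have hbb : BddBelow ((fun t => 8 * M * t - f t) '' (Set.Ioo 0 (1/2))) := by
    refine ⟨-M, ?_⟩
    rintro _ ⟨t, ht, rfl⟩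
    have h1 := abs_le.1 (hM t ⟨ht.1, by linarith [ht.2]⟩)
    have := mul_nonneg hM0 ht.1.le
    simp only
    linarith
  have hlim := hmono.tendsto_nhdsWithin_Ioo_right (by norm_num) hbb
  generalize sInf ((fun t => 8 * M * t - f t) '' (Set.Ioo 0 (1/2))) = K at hlim
  have hid : Filter.Tendsto (fun t : ℝ => 8 * M * t) (nhdsWithin 0 (Set.Ioi 0)) (nhds 0) := by
    have : Continuous (fun t : ℝ => 8 * M * t) := by fun_prop
    simpa using (this.tendsto 0).mono_left nhdsWithin_le_nhds
  have hf : Filter.Tendsto f (nhdsWithin 0 (Set.Ioi 0)) (nhds (-K)) := by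
    have := hid.sub hlim
    simpa using this
  have hmem : Set.Ioo (0:ℝ) 1 ∈ nhdsWithin (0:ℝ) (Set.Ioi 0) :=
    Ioo_mem_nhdsGT (by norm_num)
  generalize -K = L at hf
  refine ⟨L, hf.mono_left (nhdsWithin_mono _ fun x hx => hx.1), ?_⟩
  haveI : Nonempty (Set.Ioo (0:ℝ) 1) := ⟨⟨1/2, by norm_num, by norm_num⟩⟩
  have hup : ∀ τ : ℝ, ⨅ t : Set.Ioo (0:ℝ) 1, (f t - τ * t) ≤ L := by
    intro τ
    have hb : BddBelow (Set.range fun t : Set.Ioo (0:ℝ) 1 => (f t - τ * t)) := by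
      refine ⟨-M - |τ|, ?_⟩
      rintro _ ⟨⟨t, ht⟩, rfl⟩
      have h1 := abs_le.1 (hM t ht)
      have h2 : τ * t ≤ |τ| * t := mul_le_mul_of_nonneg_right (le_abs_self τ) ht.1.le
      have h3 : |τ| * t ≤ |τ| := mul_le_of_le_one_right (abs_nonneg τ) ht.2.le
      simp only
      linarith
    have h0 : Filter.Tendsto (fun t : ℝ => f t - τ * t) (nhdsWithin 0 (Set.Ioi 0)) (nhds L) := by
      have : Continuous (fun t : ℝ => τ * t) := by fun_prop
      simpa using hf.sub ((this.tendsto 0).mono_left nhdsWithin_le_nhds)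
    refine ge_of_tendsto h0 ?_
    filter_upwards [hmem] with t ht
    exact ciInf_le hb ⟨t, ht⟩
  refine tendsto_order.2 ⟨fun a ha => ?_, fun a ha => .of_forall fun τ => (hup τ).trans_lt ha⟩
  obtain ⟨b, hab, hbL⟩ := exists_between ha
  obtain ⟨δ, hδ, hδs⟩ := mem_nhdsGT_iff_exists_Ioo_subset.1 (hf.eventually (lt_mem_nhds hbL))
  have hδ : 0 < δ := hδ
  filter_upwards [Filter.eventually_le_atBot 0, Filter.eventually_le_atBot ((-M - b) / δ)]
    with τ h0 h1
  refine hab.trans_le (le_ciInf ?_)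
  rintro ⟨t, ht⟩
  simp only
  rcases lt_or_ge t δ with h | h
  · have h2 : b < f t := hδs ⟨ht.1, h⟩
    nlinarith [ht.1]
  · have h2 := abs_le.1 (hM t ht)
    rw [le_div_iff₀ hδ] at h1
    nlinarith
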